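/- Consider a solvable system of bipolar max-product fuzzy relation equations max_{j=1..m} max(a_{ij}^+ · x_j, a_{ij}^- · n_P(x_j)) = b_i, i ∈ {1,...,n}, and suppose (x̂_1,...,x̂_m) is a maximal solution of the system. Then for every j ∈ {1,...,m} with x̂_j > 0, it holds that x̂_j = min{b_h ←_P a_{hj}^+ : h ∈ {1,...,n}}. -/

import Mathlib

open Finset
open scoped Classical

/-- Product negation: `nP 0 = 1`, `nP x = 0` for `x ≠ 0`. -/
noncomputable def nP (x : ℝ) : ℝ := if x = 0 then 1 else 0

/-- Residuated implication of the product: `resP z x = min 1 (z / x)` for `x > 0`,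
and `resP z 0 = 1`. -/
noncomputable def resP (z x : ℝ) : ℝ := if x = 0 then 1 else min 1 (z / x)

/-- Left-hand side of a bipolar max-product fuzzy relation equation:
`max_{j=1..m} max (a_j^+ * x_j) (a_j^- * nP (x_j))`. -/
noncomputable def eqLHS {m : ℕ} (hm : 0 < m) (ap an : Fin m → ℝ) (x : Fin m → ℝ) : ℝ :=
  Finset.univ.sup' ⟨⟨0, hm⟩, Finset.mem_univ _⟩
    (fun j => max (ap j * x j) (an j * nP (x j)))

/-- `x` is a solution of the system of bipolar max-product FREs with coefficient
matrices `ap`, `an` and independent terms `b`. -/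
def SysSol {m n : ℕ} (hm : 0 < m) (ap an : Fin n → Fin m → ℝ) (b : Fin n → ℝ)
    (x : Fin m → ℝ) : Prop :=
  (∀ j, x j ∈ Set.Icc (0:ℝ) 1) ∧ ∀ i, eqLHS hm (ap i) (an i) x = b i

/-- `(Jp, Jm)` is a feasible pair of index sets with respect to the system. -/
def FeasiblePair {m n : ℕ} (ap an : Fin n → Fin m → ℝ) (b : Fin n → ℝ)
    (Jp Jm : Finset (Fin m)) : Prop :=
  Jp ∪ Jm = Finset.univ ∧ Jp ∩ Jm = ∅ ∧
    ∀ i,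
      (b i = 0 → (∀ j ∈ Jp, ap i j = 0) ∧ ∀ j ∈ Jm, an i j = 0) ∧
      (0 < b i →
        (∃ j ∈ Jp, b i ≤ ap i j ∧ ∀ h, resP (b i) (ap i j) ≤ resP (b h) (ap h j)) ∨
        (∃ j ∈ Jm, an i j = b i ∧ ∀ h, an h j ≤ b h))

/-!
A coordinate that stays positive enters the system only through its nonnegative coefficients,
because there the product negation vanishes. By the residuation property `a * t ≤ z ↔ t ≤ z ←_P a`,
the least of the residua `b_h ←_P a_hj⁺` is the largest value that coordinate `j` can take without
violating an equation. Hence, starting from any solution, raising every positive coordinate to this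
value gives a solution again; a maximal solution must already be fixed by this operation.
-/

theorem nP_congr {x y : ℝ} (h : x = 0 ↔ y = 0) : nP x = nP y := by
  simp only [nP, h]

theorem le_resP_iff {a z t : ℝ} (ha : 0 ≤ a) (hz : 0 ≤ z) :
    t ≤ resP z a ↔ t ≤ 1 ∧ a * t ≤ z := by
  unfold resP
  split_ifs with h
  · simp [h, hz]
  · rw [le_min_iff, le_div_iff₀' (ha.lt_of_ne' h)]

section eqLHS

variable {m : ℕ} {hm : 0 < m} {ap an x y : Fin m → ℝ}

theorem eqLHS_le_iff {c : ℝ} :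
    eqLHS hm ap an x ≤ c ↔ ∀ j, ap j * x j ≤ c ∧ an j * nP (x j) ≤ c :=
  (sup'_le_iff _ _).trans (by simp only [mem_univ, true_imp_iff, max_le_iff])

theorem eqLHS_mono_of_zero_iff (hap : 0 ≤ ap) (hle : x ≤ y) (hzero : ∀ j, x j = 0 ↔ y j = 0) :
    eqLHS hm ap an x ≤ eqLHS hm ap an y :=
  sup'_mono_fun fun j _ =>
    max_le_max (mul_le_mul_of_nonneg_left (hle j) (hap j)) (by rw [nP_congr (hzero j)])

end eqLHS

section System

variable {m n : ℕ} {hm : 0 < m} {ap an : Fin n → Fin m → ℝ} {b : Fin n → ℝ} {x y : Fin m → ℝ}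

/-- The least of the residua `b_h ←_P a_hj⁺` over all equations `h`, an upper bound for the `j`-th
coordinate of every solution when the `a_hj⁺` are nonnegative. -/
noncomputable def minResP (hn : 0 < n) (ap : Fin n → Fin m → ℝ) (b : Fin n → ℝ) (j : Fin m) : ℝ :=
  univ.inf' ⟨⟨0, hn⟩, mem_univ _⟩ fun h => resP (b h) (ap h j)

/-- The tuple obtained from `x` by raising every nonzero coordinate to `minResP`: the greatest
solution with the same zero coordinates as `x`, if `x` is a solution and `a⁺` is nonnegative. -/
noncomputable def raiseSupport (hn : 0 < n) (ap : Fin n → Fin m → ℝ) (b : Fin n → ℝ)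
    (x : Fin m → ℝ) (j : Fin m) : ℝ :=
  if x j = 0 then 0 else minResP hn ap b j

theorem le_minResP_iff (hn : 0 < n) {j : Fin m} (hap : ∀ i, 0 ≤ ap i j) (hb : ∀ i, 0 ≤ b i)
    {t : ℝ} : t ≤ minResP hn ap b j ↔ t ≤ 1 ∧ ∀ i, ap i j * t ≤ b i := by
  have : Nonempty (Fin n) := ⟨⟨0, hn⟩⟩
  refine (le_inf'_iff _ _).trans ?_
  simp only [mem_univ, le_resP_iff (hap _) (hb _), forall_and, forall_const]

namespace SysSol

theorem mul_le (hx : SysSol hm ap an b x) (i : Fin n) (j : Fin m) : ap i j * x j ≤ b i :=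
  (eqLHS_le_iff.1 (hx.2 i).le j).1

theorem mul_nP_le (hx : SysSol hm ap an b x) (i : Fin n) (j : Fin m) : an i j * nP (x j) ≤ b i :=
  (eqLHS_le_iff.1 (hx.2 i).le j).2

theorem rhs_nonneg (hx : SysSol hm ap an b x) {i : Fin n} {j : Fin m} (hap : 0 ≤ ap i j) :
    0 ≤ b i :=
  (mul_nonneg hap (hx.1 j).1).trans (hx.mul_le i j)

theorem le_minResP (hn : 0 < n) {j : Fin m} (hap : ∀ i, 0 ≤ ap i j) (hx : SysSol hm ap an b x) :
    x j ≤ minResP hn ap b j :=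
  (le_minResP_iff hn hap fun i => hx.rhs_nonneg (hap i)).2
    ⟨(hx.1 j).2, fun i => hx.mul_le i j⟩

theorem of_le_of_zero_iff (hap : ∀ i j, 0 ≤ ap i j) (hx : SysSol hm ap an b x) (hle : x ≤ y)
    (hzero : ∀ j, x j = 0 ↔ y j = 0) (hone : ∀ j, y j ≤ 1) (hmul : ∀ i j, ap i j * y j ≤ b i) :
    SysSol hm ap an b y := by
  refine ⟨fun j => ⟨(hx.1 j).1.trans (hle j), hone j⟩, fun i => le_antisymm ?_ ?_⟩
  · exact eqLHS_le_iff.2 fun j => ⟨hmul i j, nP_congr (hzero j) ▸ hx.mul_nP_le i j⟩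
  · exact (hx.2 i).symm.le.trans (eqLHS_mono_of_zero_iff (hap i) hle hzero)

theorem le_raiseSupport (hn : 0 < n) (hap : ∀ i j, 0 ≤ ap i j) (hx : SysSol hm ap an b x) :
    x ≤ raiseSupport hn ap b x := by
  intro j
  unfold raiseSupport
  split_ifs with hj
  · exact hj.le
  · exact hx.le_minResP hn (hap · j)

theorem raiseSupport_le_minResP (hn : 0 < n) {j : Fin m} (hap : ∀ i, 0 ≤ ap i j)
    (hx : SysSol hm ap an b x) : raiseSupport hn ap b x j ≤ minResP hn ap b j := by
  unfold raiseSupport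
  split_ifs
  · exact (hx.1 j).1.trans (hx.le_minResP hn hap)
  · exact le_rfl

end SysSol

theorem sysSol_raiseSupport (hn : 0 < n) (hap : ∀ i j, 0 ≤ ap i j) (hx : SysSol hm ap an b x) :
    SysSol hm ap an b (raiseSupport hn ap b x) := by
  have hle := hx.le_raiseSupport hn hap
  have hzero (j : Fin m) : x j = 0 ↔ raiseSupport hn ap b x j = 0 :=
    ⟨fun hj => if_pos hj, fun hj => ((hle j).trans hj.le).antisymm (hx.1 j).1⟩
  have hadm (j : Fin m) := (le_minResP_iff hn (hap · j) fun i => hx.rhs_nonneg (hap i j)).1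
    (hx.raiseSupport_le_minResP hn (hap · j))
  exact hx.of_le_of_zero_iff hap hle hzero (fun j => (hadm j).1) fun i j => (hadm j).2 i

end System

theorem stmt15_general {m n : ℕ} {hm : 0 < m} (hn : 0 < n) {ap an : Fin n → Fin m → ℝ}
    {b : Fin n → ℝ} (hap : ∀ i j, 0 ≤ ap i j) {xhat : Fin m → ℝ}
    (hmax : Maximal (SysSol hm ap an b) xhat) {j : Fin m} (hj : xhat j ≠ 0) :
    xhat j = univ.inf' ⟨⟨0, hn⟩, mem_univ _⟩ fun h => resP (b h) (ap h j) := by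
  have hfix : xhat = raiseSupport hn ap b xhat :=
    hmax.eq_of_le (sysSol_raiseSupport hn hap hmax.prop) (hmax.prop.le_raiseSupport hn hap)
  exact (congrFun hfix j).trans (if_neg hj)

theorem stmt15 (m n : ℕ) (hm : 0 < m) (hn : 0 < n)
    (ap an : Fin n → Fin m → ℝ) (b : Fin n → ℝ)
    (hap : ∀ i j, ap i j ∈ Set.Icc (0:ℝ) 1) (han : ∀ i j, an i j ∈ Set.Icc (0:ℝ) 1)
    (hb : ∀ i, b i ∈ Set.Icc (0:ℝ) 1)
    (hsolv : ∃ x, SysSol hm ap an b x)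
    (xhat : Fin m → ℝ)
    (hsol : SysSol hm ap an b xhat)
    (hmax : ∀ y, SysSol hm ap an b y → ¬ xhat < y) :
    ∀ j, 0 < xhat j → xhat j = Finset.univ.inf' ⟨⟨0, hn⟩, Finset.mem_univ _⟩ (fun h => resP (b h) (ap h j)) :=
  fun _ hj => stmt15_general hn (fun i j => (hap i j).1)
    (maximal_iff_forall_gt.2 ⟨hsol, fun y hlt hy => hmax y hy hlt⟩) hj.ne'
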